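/- arXiv:2301.11795 — 2 statements merged into one kernel-verified Lean document; each statement's English description precedes it below -/
import Mathlib

section
/- Let p ≥ 2 and let ξ, η ∈ ℝ^k with |ξ| > 1. Then there exists a constant c(p), depending only on p, such that |H_{p−1}(ξ) − H_{p−1}(η)| ≤ c(p) · [ (|ξ|−1) + (|η|−1)_+ ]^{p−1} / (|ξ|−1) · |ξ − η|. -/
/-- `Hmap lam ξ = (|ξ| − 1)₊^lam • ξ/|ξ|` for `ξ ≠ 0`, and `Hmap lam 0 = 0`. -/
noncomputable def Hmap {k : ℕ} (lam : ℝ) (ξ : EuclideanSpace ℝ (Fin k)) :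
    EuclideanSpace ℝ (Fin k) :=
  open Classical in
  if ξ = (0 : EuclideanSpace ℝ (Fin k)) then 0
  else (max (‖ξ‖ - 1) 0) ^ lam • ‖ξ‖⁻¹ • ξ

/-!
Write `Hξ = a ^ r • x` and `Hη = b ^ r • y`, where `a = (|ξ| - 1)₊`, `b = (|η| - 1)₊` and `x`, `y`
are the normalizations of `ξ`, `η`. By symmetry let `b ≤ a`, and split
`a ^ r • x - b ^ r • y = a ^ r • (x - y) + (a ^ r - b ^ r) • y`. After multiplication by `a`, the
angular part is controlled by `a |x - y| ≤ |ξ| |x - y| ≤ 2 |ξ - η|`, and the radial part by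
`a (a ^ r - b ^ r) ≤ max r 1 * a ^ r * (a - b)`, since `a - b ≤ |ξ - η|`. The latter inequality is
Bernoulli's for `1 ≤ r`, and `u ≤ u ^ r` for `u = b / a ∈ [0, 1]` if `r ≤ 1`.
-/

open NormedSpace (normalize norm_normalize norm_smul_normalize)

lemma one_sub_rpow_le_max_mul_one_sub {u : ℝ} (r : ℝ) (hu₀ : 0 ≤ u) (hu₁ : u ≤ 1) :
    1 - u ^ r ≤ max r 1 * (1 - u) := by
  rcases le_total r 1 with hr | hr
  · rw [max_eq_right hr, one_mul]
    linarith [Real.self_le_rpow_of_le_one hu₀ hu₁ hr]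
  · have bernoulli : 1 + r * (u - 1) ≤ (1 + (u - 1)) ^ r :=
      one_add_mul_self_le_rpow_one_add (by linarith) hr
    rw [add_sub_cancel] at bernoulli
    rw [max_eq_left hr]
    linarith

lemma mul_rpow_sub_rpow_le {s t : ℝ} (r : ℝ) (hs : 0 ≤ s) (hst : s ≤ t) :
    t * (t ^ r - s ^ r) ≤ max r 1 * t ^ r * (t - s) := by
  obtain rfl | ht := (hs.trans hst).eq_or_lt
  · simp [le_antisymm hst hs]
  have hu : 1 - (s / t) ^ r ≤ max r 1 * (1 - s / t) :=
    one_sub_rpow_le_max_mul_one_sub r (by positivity) (div_le_one_of_le₀ hst ht.le)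
  have htr : t ^ r ≠ 0 := (Real.rpow_pos_of_pos ht r).ne'
  calc t * (t ^ r - s ^ r) = t * t ^ r * (1 - (s / t) ^ r) := by
        rw [Real.div_rpow hs ht.le]; field_simp
    _ ≤ t * t ^ r * (max r 1 * (1 - s / t)) := by gcongr
    _ = max r 1 * t ^ r * (t - s) := by field_simp

section NormedSpace

variable {E : Type*} [NormedAddCommGroup E] [NormedSpace ℝ E]

lemma norm_normalize_le_one (x : E) : ‖normalize x‖ ≤ 1 := by
  rcases eq_or_ne x 0 with rfl | hx
  · simp
  · exact (norm_normalize hx).le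

lemma norm_mul_norm_normalize_sub_normalize_le (x y : E) :
    ‖x‖ * ‖normalize x - normalize y‖ ≤ 2 * ‖x - y‖ := by
  have decomposition :
      ‖x‖ • (normalize x - normalize y) = (x - y) + (‖y‖ - ‖x‖) • normalize y := by
    rw [smul_sub, sub_smul, norm_smul_normalize, norm_smul_normalize]
    abel
  calc ‖x‖ * ‖normalize x - normalize y‖
      = ‖(x - y) + (‖y‖ - ‖x‖) • normalize y‖ := by
        rw [← decomposition, norm_smul, norm_norm]
    _ ≤ ‖x - y‖ + |‖y‖ - ‖x‖| * ‖normalize y‖ := by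
        rw [← Real.norm_eq_abs, ← norm_smul]
        exact norm_add_le _ _
    _ ≤ ‖x - y‖ + ‖x - y‖ * 1 := by
        gcongr
        · exact (abs_norm_sub_norm_le y x).trans_eq (norm_sub_rev y x)
        · exact norm_normalize_le_one y
    _ = 2 * ‖x - y‖ := by ring

lemma norm_smul_sub_smul_le (a b : ℝ) (x y : E) :
    ‖a • x - b • y‖ ≤ |a| * ‖x - y‖ + |a - b| * ‖y‖ := by
  have decomposition : a • x - b • y = a • (x - y) + (a - b) • y := by module
  rw [decomposition, ← Real.norm_eq_abs, ← Real.norm_eq_abs, ← norm_smul, ← norm_smul]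
  exact norm_add_le _ _

lemma mul_norm_rpow_smul_normalize_sub_le {a b r : ℝ} {x y : E} (hr : 0 ≤ r) (hb : 0 ≤ b)
    (hba : b ≤ a) (hax : a ≤ ‖x‖) (habxy : a - b ≤ ‖x - y‖) :
    a * ‖a ^ r • normalize x - b ^ r • normalize y‖ ≤ (max r 1 + 2) * a ^ r * ‖x - y‖ := by
  have ha : 0 ≤ a := hb.trans hba
  have hpow : b ^ r ≤ a ^ r := Real.rpow_le_rpow hb hba hr
  have polar_split : ‖a ^ r • normalize x - b ^ r • normalize y‖ ≤
      a ^ r * ‖normalize x - normalize y‖ + (a ^ r - b ^ r) := by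
    refine (norm_smul_sub_smul_le _ _ _ _).trans ?_
    rw [abs_of_nonneg (by positivity), abs_of_nonneg (sub_nonneg.2 hpow)]
    gcongr
    exact mul_le_of_le_one_right (sub_nonneg.2 hpow) (norm_normalize_le_one y)
  have angular : a * ‖normalize x - normalize y‖ ≤ 2 * ‖x - y‖ :=
    (mul_le_mul_of_nonneg_right hax (norm_nonneg _)).trans
      (norm_mul_norm_normalize_sub_normalize_le x y)
  have radial : a * (a ^ r - b ^ r) ≤ max r 1 * a ^ r * ‖x - y‖ :=
    (mul_rpow_sub_rpow_le r hb hba).trans (by gcongr)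
  calc a * ‖a ^ r • normalize x - b ^ r • normalize y‖
      ≤ a * (a ^ r * ‖normalize x - normalize y‖ + (a ^ r - b ^ r)) := by gcongr
    _ = a ^ r * (a * ‖normalize x - normalize y‖) + a * (a ^ r - b ^ r) := by ring
    _ ≤ a ^ r * (2 * ‖x - y‖) + max r 1 * a ^ r * ‖x - y‖ := by gcongr
    _ = (max r 1 + 2) * a ^ r * ‖x - y‖ := by ring

/-- The map `H_r(ξ) = (|ξ| - 1)₊ ^ r ξ / |ξ|` on a real normed space. No case distinction at `ξ = 0`
is needed, because `normalize 0 = 0`. For `r = 0` the convention `0 ^ 0 = 1` makes it `normalize`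
everywhere. -/
noncomputable def radialExcess (r : ℝ) (ξ : E) : E :=
  max (‖ξ‖ - 1) 0 ^ r • normalize ξ

lemma max_mul_norm_radialExcess_sub_le {r : ℝ} (hr : 0 ≤ r) (ξ η : E) :
    max (max (‖ξ‖ - 1) 0) (max (‖η‖ - 1) 0) * ‖radialExcess r ξ - radialExcess r η‖ ≤
      (max r 1 + 2) * max (max (‖ξ‖ - 1) 0) (max (‖η‖ - 1) 0) ^ r * ‖ξ - η‖ := by
  wlog hηξ : ‖η‖ ≤ ‖ξ‖ generalizing ξ η
  · simpa only [max_comm (max (‖ξ‖ - 1) 0), norm_sub_rev ξ, norm_sub_rev (radialExcess r ξ)]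
      using this η ξ (le_of_not_ge hηξ)
  have hba : max (‖η‖ - 1) 0 ≤ max (‖ξ‖ - 1) 0 := by gcongr
  have habξη : max (‖ξ‖ - 1) 0 - max (‖η‖ - 1) 0 ≤ ‖ξ - η‖ :=
    calc max (‖ξ‖ - 1) 0 - max (‖η‖ - 1) 0 ≤ |(‖ξ‖ - 1) - (‖η‖ - 1)| :=
          (le_abs_self _).trans (abs_max_sub_max_le_abs _ _ _)
      _ = |‖ξ‖ - ‖η‖| := by rw [sub_sub_sub_cancel_right]
      _ ≤ ‖ξ - η‖ := abs_norm_sub_norm_le ξ η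
  rw [max_eq_left hba]
  exact mul_norm_rpow_smul_normalize_sub_le hr (le_max_right _ _) hba
    (max_le (by linarith) (norm_nonneg ξ)) habξη

theorem Hmap_difference_estimate_general {r : ℝ} (hr : 0 ≤ r) {ξ : E} (hξ : 1 < ‖ξ‖) (η : E) :
    ‖radialExcess r ξ - radialExcess r η‖ ≤
      (max r 1 + 2) * ((‖ξ‖ - 1) + max (‖η‖ - 1) 0) ^ r / (‖ξ‖ - 1) * ‖ξ - η‖ := by
  have ha : 0 < ‖ξ‖ - 1 := sub_pos.2 hξ
  have hb : 0 ≤ max (‖η‖ - 1) 0 := le_max_right _ _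
  have estimate := max_mul_norm_radialExcess_sub_le hr ξ η
  rw [max_eq_left ha.le] at estimate
  rw [div_mul_eq_mul_div, le_div_iff₀' ha]
  calc (‖ξ‖ - 1) * ‖radialExcess r ξ - radialExcess r η‖
      ≤ max (‖ξ‖ - 1) (max (‖η‖ - 1) 0) * ‖radialExcess r ξ - radialExcess r η‖ := by
        gcongr
        exact le_max_left _ _
    _ ≤ (max r 1 + 2) * max (‖ξ‖ - 1) (max (‖η‖ - 1) 0) ^ r * ‖ξ - η‖ := estimate
    _ ≤ (max r 1 + 2) * ((‖ξ‖ - 1) + max (‖η‖ - 1) 0) ^ r * ‖ξ - η‖ := by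
        gcongr
        exact max_le_add_of_nonneg ha.le hb

end NormedSpace

lemma Hmap_eq_radialExcess {k : ℕ} (r : ℝ) (ξ : EuclideanSpace ℝ (Fin k)) :
    Hmap r ξ = radialExcess r ξ := by
  rcases eq_or_ne ξ 0 with rfl | hξ
  · simp [Hmap, radialExcess]
  · simp [Hmap, radialExcess, NormedSpace.normalize, hξ]

/-- for `p ≥ 2` there is a constant `c(p)`, depending only on `p`, such that
for all `ξ, η ∈ ℝ^k` with `|ξ| > 1`,
`|H_{p−1}(ξ) − H_{p−1}(η)| ≤ c(p) [(|ξ|−1) + (|η|−1)₊]^{p−1} / (|ξ|−1) · |ξ − η|`. -/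
theorem Hmap_difference_estimate (p : ℝ) (hp : 2 ≤ p) :
    ∃ c : ℝ, 0 < c ∧ ∀ (k : ℕ) (ξ η : EuclideanSpace ℝ (Fin k)), 1 < ‖ξ‖ →
      ‖Hmap (p - 1) ξ - Hmap (p - 1) η‖ ≤
        c * ((‖ξ‖ - 1) + max (‖η‖ - 1) 0) ^ (p - 1) / (‖ξ‖ - 1) * ‖ξ - η‖ := by
  refine ⟨max (p - 1) 1 + 2, by positivity, fun k ξ η hξ => ?_⟩
  simpa only [Hmap_eq_radialExcess] using
    Hmap_difference_estimate_general (show 0 ≤ p - 1 by linarith) hξ η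
end

section
/- Let p ≥ 2 and let ξ, η ∈ ℝ^k with |ξ| > 1. Then ⟨H_{p−1}(η) − H_{p−1}(ξ), η − ξ⟩ ≥ (min{1, p−1} / 2^{p+1}) · (|ξ|−1)^p / ( |ξ| (|ξ| + |η|) ) · |η − ξ|². -/
open scoped RealInnerProductSpace

/-!
Let `c` be the cosine of the angle between `ξ` and `η`. For a radial map `v ↦ φ(|v|) v/|v|`, the
inner product of the increments is the convex combination, with weights `(1 + c)/2` and
`(1 - c)/2`, of its values when `ξ` and `η` are parallel and when they are antiparallel; so is
`|η - ξ|²`, which is the case `φ(t) = t`. A lower bound by a multiple of `|η - ξ|²` therefore only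
has to be checked in these two scalar cases. For `φ(t) = (t - 1)₊^λ` the antiparallel case is
immediate, and the parallel one follows from `(s - 1)₊ ≤ (s/r) (r - 1)₊` for `s ≤ r` together with
the Bernoulli-type inequality `1 - t^λ ≥ min(1, λ) (1 - t)` on `[0, 1]`.
-/

section RadialMap

variable {E : Type*} [NormedAddCommGroup E] [InnerProductSpace ℝ E]

/-- The radial map `v ↦ φ(|v|) v/|v|` with profile `φ`. It vanishes at `0` whatever `φ 0` is. -/
noncomputable def radialMap (φ : ℝ → ℝ) (v : E) : E :=
  φ ‖v‖ • ‖v‖⁻¹ • v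

lemma radialMap_id (v : E) : radialMap id v = v := by
  rcases eq_or_ne v 0 with rfl | hv
  · simp [radialMap]
  · exact smul_inv_smul₀ (norm_ne_zero_iff.mpr hv) v

lemma inner_radialMap_self (φ : ℝ → ℝ) (v : E) : ⟪radialMap φ v, v⟫ = φ ‖v‖ * ‖v‖ := by
  rw [radialMap, real_inner_smul_left, real_inner_smul_left, real_inner_self_eq_norm_mul_norm,
    ← mul_assoc ‖v‖⁻¹, inv_mul_mul_self]

lemma inner_radialMap_left (φ : ℝ → ℝ) (v w : E) :
    ⟪radialMap φ v, w⟫ = φ ‖v‖ * ‖w‖ * Real.cos (InnerProductGeometry.angle v w) := by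
  rcases eq_or_ne v 0 with rfl | hv
  · simp [radialMap]
  · rw [radialMap, real_inner_smul_left, real_inner_smul_left,
      ← InnerProductGeometry.cos_angle_mul_norm_mul_norm]
    field_simp

lemma inner_radialMap_sub_sub (φ : ℝ → ℝ) (v w : E) :
    ⟪radialMap φ v - radialMap φ w, v - w⟫ =
      (1 + Real.cos (InnerProductGeometry.angle v w)) / 2 *
          ((φ ‖v‖ - φ ‖w‖) * (‖v‖ - ‖w‖)) +
        (1 - Real.cos (InnerProductGeometry.angle v w)) / 2 *
          ((φ ‖v‖ + φ ‖w‖) * (‖v‖ + ‖w‖)) := by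
  rw [inner_sub_left, inner_sub_right, inner_sub_right, inner_radialMap_self,
    inner_radialMap_self, inner_radialMap_left, inner_radialMap_left,
    InnerProductGeometry.angle_comm w v]
  ring

lemma mul_norm_sub_sq_le_inner_radialMap_sub_sub {φ : ℝ → ℝ} {K : ℝ} {v w : E}
    (parallel : K * (‖v‖ - ‖w‖) ^ 2 ≤ (φ ‖v‖ - φ ‖w‖) * (‖v‖ - ‖w‖))
    (antiparallel : K * (‖v‖ + ‖w‖) ^ 2 ≤ (φ ‖v‖ + φ ‖w‖) * (‖v‖ + ‖w‖)) :
    K * ‖v - w‖ ^ 2 ≤ ⟪radialMap φ v - radialMap φ w, v - w⟫ := by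
  have norm_sub_sq := inner_radialMap_sub_sub id v w
  simp only [radialMap_id, real_inner_self_eq_norm_sq, id_eq] at norm_sub_sq
  rw [inner_radialMap_sub_sub, norm_sub_sq]
  set c := Real.cos (InnerProductGeometry.angle v w)
  have hc₁ : 0 ≤ (1 + c) / 2 := by linarith [Real.neg_one_le_cos (InnerProductGeometry.angle v w)]
  have hc₂ : 0 ≤ (1 - c) / 2 := by linarith [Real.cos_le_one (InnerProductGeometry.angle v w)]
  calc K * ((1 + c) / 2 * ((‖v‖ - ‖w‖) * (‖v‖ - ‖w‖)) +
          (1 - c) / 2 * ((‖v‖ + ‖w‖) * (‖v‖ + ‖w‖)))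
      = (1 + c) / 2 * (K * (‖v‖ - ‖w‖) ^ 2) + (1 - c) / 2 * (K * (‖v‖ + ‖w‖) ^ 2) := by ring
    _ ≤ _ := by gcongr

end RadialMap

lemma min_one_mul_one_sub_le_one_sub_rpow {lam t : ℝ} (hlam : 0 ≤ lam) (ht₀ : 0 ≤ t)
    (ht₁ : t ≤ 1) : min 1 lam * (1 - t) ≤ 1 - t ^ lam := by
  rcases le_total lam 1 with h | h
  · have bernoulli := rpow_one_add_le_one_add_mul_self (s := t - 1) (by linarith) hlam h
    rw [add_sub_cancel] at bernoulli
    rw [min_eq_right h]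
    linarith
  · rw [min_eq_left h, one_mul]
    exact sub_le_sub_left (Real.rpow_le_self_of_le_one ht₀ ht₁ h) 1

section ExcessPow

/-- The profile `t ↦ (t - 1)₊^lam` of `Hmap lam`. For `lam = 0` it is constantly `1`, as
`0 ^ 0 = 1`. -/
noncomputable def excessPow (lam t : ℝ) : ℝ :=
  max (t - 1) 0 ^ lam

variable {lam r s : ℝ}

lemma excessPow_nonneg (lam t : ℝ) : 0 ≤ excessPow lam t :=
  Real.rpow_nonneg (le_max_right _ _) _

lemma excessPow_mono (hlam : 0 ≤ lam) : Monotone (excessPow lam) := fun s r hsr ↦ by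
  unfold excessPow
  gcongr

lemma excessPow_le_div_rpow_mul (hlam : 0 ≤ lam) (hs : 0 ≤ s) (hsr : s ≤ r) (hr : 0 < r) :
    excessPow lam s ≤ (s / r) ^ lam * excessPow lam r := by
  rw [excessPow, excessPow, ← Real.mul_rpow (by positivity) (le_max_right _ _)]
  refine Real.rpow_le_rpow (le_max_right _ _) (max_le ?_ (by positivity)) hlam
  calc s - 1 ≤ s - s / r := by gcongr; exact div_le_one_of_le₀ hsr hr.le
    _ = s / r * (r - 1) := by field_simp
    _ ≤ s / r * max (r - 1) 0 := by gcongr; exact le_max_left _ _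

lemma min_one_mul_excessPow_div_add_mul_sub_le (hlam : 0 ≤ lam) (hs : 0 ≤ s) (hsr : s ≤ r) :
    min 1 lam * (excessPow lam r / (r + s)) * (r - s) ≤ excessPow lam r - excessPow lam s := by
  rcases (hs.trans hsr).eq_or_lt with rfl | hr
  · simp [le_antisymm hsr hs]
  have hφr := excessPow_nonneg lam r
  calc min 1 lam * (excessPow lam r / (r + s)) * (r - s)
      ≤ min 1 lam * (excessPow lam r / r) * (r - s) := by
        have : 0 ≤ r - s := sub_nonneg.mpr hsr
        gcongr
        exact le_add_of_nonneg_right hs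
    _ = min 1 lam * (1 - s / r) * excessPow lam r := by field_simp
    _ ≤ (1 - (s / r) ^ lam) * excessPow lam r := by
        gcongr
        exact min_one_mul_one_sub_le_one_sub_rpow hlam (by positivity)
          (div_le_one_of_le₀ hsr hr.le)
    _ ≤ excessPow lam r - excessPow lam s := by
        linarith [excessPow_le_div_rpow_mul hlam hs hsr hr]

lemma min_one_mul_excessPow_div_add_mul_sub_sq_le (hlam : 0 ≤ lam) (hr : 0 ≤ r) (hs : 0 ≤ s) :
    min 1 lam * (excessPow lam r / (r + s)) * (s - r) ^ 2 ≤
      (excessPow lam s - excessPow lam r) * (s - r) := by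
  rcases le_total s r with hsr | hrs
  · have increment := min_one_mul_excessPow_div_add_mul_sub_le hlam hs hsr
    linear_combination mul_le_mul_of_nonneg_right increment (sub_nonneg.mpr hsr)
  · have increment := min_one_mul_excessPow_div_add_mul_sub_le hlam hr hrs
    calc min 1 lam * (excessPow lam r / (r + s)) * (s - r) ^ 2
        ≤ min 1 lam * (excessPow lam s / (s + r)) * (s - r) ^ 2 := by
          rw [add_comm r s]
          gcongr
          exact excessPow_mono hlam hrs
      _ ≤ (excessPow lam s - excessPow lam r) * (s - r) := by
          linear_combination mul_le_mul_of_nonneg_right increment (sub_nonneg.mpr hrs)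

lemma min_one_mul_excessPow_div_add_mul_add_sq_le (hr : 0 ≤ r) (hs : 0 ≤ s) :
    min 1 lam * (excessPow lam r / (r + s)) * (s + r) ^ 2 ≤
      (excessPow lam s + excessPow lam r) * (s + r) := by
  have hφr := excessPow_nonneg lam r
  have hφs := excessPow_nonneg lam s
  calc min 1 lam * (excessPow lam r / (r + s)) * (s + r) ^ 2
      ≤ 1 * (excessPow lam r / (r + s)) * (s + r) ^ 2 := by
        gcongr
        exact min_le_left _ _
    _ = excessPow lam r * (s + r) := by
        rw [add_comm r s]
        field_simp
    _ ≤ (excessPow lam s + excessPow lam r) * (s + r) := by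
        gcongr
        exact le_add_of_nonneg_left hφs

lemma sub_one_rpow_div_le_excessPow_div (p : ℝ) (hr : 1 < r) (hs : 0 ≤ s) :
    (r - 1) ^ p / (r * (r + s)) ≤ excessPow (p - 1) r / (r + s) := by
  have hr₁ : 0 < r - 1 := sub_pos.mpr hr
  rw [excessPow, max_eq_left hr₁.le, Real.rpow_sub_one hr₁.ne', ← div_div]
  gcongr
  linarith

end ExcessPow

theorem Hmap_monotonicity_quantitative_general {E : Type*} [NormedAddCommGroup E]
    [InnerProductSpace ℝ E] {lam : ℝ} (hlam : 0 ≤ lam) (ξ η : E) :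
    ⟪radialMap (excessPow lam) η - radialMap (excessPow lam) ξ, η - ξ⟫ ≥
      min 1 lam * (excessPow lam ‖ξ‖ / (‖ξ‖ + ‖η‖)) * ‖η - ξ‖ ^ 2 :=
  mul_norm_sub_sq_le_inner_radialMap_sub_sub
    (min_one_mul_excessPow_div_add_mul_sub_sq_le hlam (norm_nonneg ξ) (norm_nonneg η))
    (min_one_mul_excessPow_div_add_mul_add_sq_le (norm_nonneg ξ) (norm_nonneg η))

lemma Hmap_eq_radialMap {k : ℕ} (lam : ℝ) (ξ : EuclideanSpace ℝ (Fin k)) :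
    Hmap lam ξ = radialMap (excessPow lam) ξ := by
  unfold Hmap
  split_ifs with h
  · simp [h, radialMap]
  · rfl

/-- for `p ≥ 2` and `ξ, η ∈ ℝ^k` with `|ξ| > 1`,
`⟨H_{p−1}(η) − H_{p−1}(ξ), η − ξ⟩ ≥ (min{1, p−1}/2^{p+1}) (|ξ|−1)^p/(|ξ|(|ξ|+|η|)) |η − ξ|²`. -/
theorem Hmap_monotonicity_quantitative {k : ℕ} (p : ℝ) (hp : 2 ≤ p)
    (ξ η : EuclideanSpace ℝ (Fin k)) (hξ : 1 < ‖ξ‖) :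
    ⟪Hmap (p - 1) η - Hmap (p - 1) ξ, η - ξ⟫ ≥
      min 1 (p - 1) / 2 ^ (p + 1) *
        ((‖ξ‖ - 1) ^ p / (‖ξ‖ * (‖ξ‖ + ‖η‖))) * ‖η - ξ‖ ^ 2 := by
  have hmin : 0 ≤ min 1 (p - 1) := le_min zero_le_one (by linarith)
  have := excessPow_nonneg (p - 1) ‖ξ‖
  rw [Hmap_eq_radialMap, Hmap_eq_radialMap]
  refine (Hmap_monotonicity_quantitative_general (by linarith) ξ η).le.trans' ?_
  gcongr ?_ * ?_ * _
  · exact div_le_self hmin (Real.one_le_rpow one_le_two (by linarith))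
  · exact sub_one_rpow_div_le_excessPow_div p hξ (norm_nonneg η)
end
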